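/- (Proposition 1(ii)) Let I⊆{1,…,d} be a nonempty subset, and suppose Assumption (N2) holds for the noise density q with constants A>0, λ_1,…,λ_d>0 (so that |q̂_I(t_I)| ≥ A^{-1}∏_{j∈I}(1+t_j²)^{-λ_j/2} for all t). Then there exists a constant C_I = C_I(|I|,K,q) > 0 such that for every h∈(0,1]^d: ‖L_{(h_I)}‖_2 ≤ C_I ∏_{j∈I} h_j^{-λ_j−1/2} and ‖L_{(h_I)}‖_∞ ≤ C_I ∏_{j∈I} h_j^{-λ_j−1}. One may take C_I = A·(2π)^{-|I|/2}·max(‖K̂_I g_I‖_2, ‖K̂_I g_I‖_1), where K_I(x_I)=∏_{j∈I}K(x_j) and g_I(t_I)=∏_{j∈I}(1+t_j²)^{λ_j/2}. -/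

import Mathlib

/-!
Substituting `x ↦ x / h` gives `K̂_{h_I}(t) = K̂_I(h t)`, so `L_{(h_I)}` is the inverse Fourier
transform of `G(t) = K̂_I(h t) / q̂_I(t)`. Since `h_j ≤ 1`, one has
`1 + t_j² ≤ h_j⁻² (1 + (h_j t_j)²)`, and Assumption (N2) yields the pointwise bound
`|G(t)| ≤ A ∏ h_j^{-λ_j} |(K̂_I g_I)(h t)|`. Undoing the dilation in `L_p` costs a further factor
`∏ h_j^{-1/p}`. Plancherel's theorem turns the bound on `‖G‖_2` into the one on `‖L_{(h_I)}‖_2`, and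
`‖L_{(h_I)}‖_∞ ≤ (2π)^{-|I|} ‖G‖_1`. All norms are finite because `K̂_I g_I` is a tensor product of
one-dimensional Schwartz functions.
-/

open MeasureTheory ENNReal Filter Finset
open scoped ENNReal Topology

noncomputable section

namespace Deconv

/-- Euclidean inner product on a finite coordinate space. -/
def dotp {ι : Type} [Fintype ι] (t x : ι → ℝ) : ℝ := ∑ j, t j * x j

/-- Fourier transform `ĝ(t) = ∫ e^{i⟨t,x⟩} g(x) dx` of a real function. -/
def ftI {ι : Type} [Fintype ι] (g : (ι → ℝ) → ℝ) (t : ι → ℝ) : ℂ :=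
  ∫ x : ι → ℝ, Complex.exp (Complex.I * (dotp t x : ℝ)) * (g x : ℂ)

/-- Glue coordinates indexed by `I` with coordinates indexed by `Iᶜ`. -/
def glue {d : ℕ} (I : Finset (Fin d)) (xI : I → ℝ) (y : ↥(Iᶜ) → ℝ) : Fin d → ℝ :=
  fun i => if h : i ∈ I then xI ⟨i, h⟩ else y ⟨i, Finset.mem_compl.mpr h⟩

/-- Marginal density on the coordinates indexed by `I`. -/
def marginal {d : ℕ} (I : Finset (Fin d)) (g : (Fin d → ℝ) → ℝ) (xI : I → ℝ) : ℝ :=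
  ∫ y : ↥(Iᶜ) → ℝ, g (glue I xI y)

/-- A probability density. -/
def IsDensity {ι : Type} [Fintype ι] (g : (ι → ℝ) → ℝ) : Prop :=
  (∀ x, 0 ≤ g x) ∧ (∫ x, g x) = 1

/-- Product kernel `K_I`. -/
def KI {d : ℕ} (I : Finset (Fin d)) (K : ℝ → ℝ) (xI : I → ℝ) : ℝ := ∏ j : I, K (xI j)

/-- Rescaled product kernel `K_{h_I}`. -/
def Kh {d : ℕ} (I : Finset (Fin d)) (K : ℝ → ℝ) (h : Fin d → ℝ) (xI : I → ℝ) : ℝ :=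
  (∏ j ∈ I, h j)⁻¹ * ∏ j : I, K (xI j / h ↑j)

/-- The deconvolution kernel `L_{(h_I)}`. -/
def Lh {d : ℕ} (I : Finset (Fin d)) (K : ℝ → ℝ) (q : (Fin d → ℝ) → ℝ) (h : Fin d → ℝ)
    (xI : I → ℝ) : ℂ :=
  (((2 * Real.pi) ^ (-(I.card : ℝ)) : ℝ) : ℂ) *
    ∫ t : I → ℝ, Complex.exp (-(Complex.I * (dotp t xI : ℝ))) *
      (ftI (Kh I K h) t / ftI (marginal I q) t)

/-- Convolution of two densities on `ℝ^d`. -/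
def conv {d : ℕ} (f g : (Fin d → ℝ) → ℝ) (x : Fin d → ℝ) : ℝ := ∫ y, f (x - y) * g y

/-- Law of the observation vector `Y^{(n)} = (Y_1,…,Y_n)`, `Y_k = X_k + ε_k`:
the `n`-fold product of the measure with density `f ⋆ q`. -/
def obsMeasure (d n : ℕ) (f q : (Fin d → ℝ) → ℝ) : Measure (Fin n → Fin d → ℝ) :=
  Measure.pi fun _ => volume.withDensity fun x => ENNReal.ofReal (conv f q x)

/-- Kernel deconvolution estimator `f̃_{h_I}` built from the sample `y`. -/
def fHat {d : ℕ} (I : Finset (Fin d)) (K : ℝ → ℝ) (q : (Fin d → ℝ) → ℝ) (h : Fin d → ℝ)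
    {n : ℕ} (y : Fin n → Fin d → ℝ) (xI : I → ℝ) : ℂ :=
  (n : ℂ)⁻¹ * ∑ k, Lh I K q h (fun j => xI j - y k ↑j)

/-- Expectation `E_f f̃_{h_I}(x_I)`. -/
def fHatMean {d : ℕ} (I : Finset (Fin d)) (K : ℝ → ℝ) (f q : (Fin d → ℝ) → ℝ)
    (h : Fin d → ℝ) (xI : I → ℝ) : ℂ :=
  ∫ y : Fin d → ℝ, Lh I K q h (fun j => xI j - y ↑j)
    ∂(volume.withDensity fun x => ENNReal.ofReal (conv f q x))

/-- Stochastic error `ξ_{h_I} = f̃_{h_I} - E_f f̃_{h_I}`. -/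
def xiProc {d : ℕ} (I : Finset (Fin d)) (K : ℝ → ℝ) (f q : (Fin d → ℝ) → ℝ) (h : Fin d → ℝ)
    {n : ℕ} (y : Fin n → Fin d → ℝ) (xI : I → ℝ) : ℂ :=
  fHat I K q h y xI - fHatMean I K f q h xI

/-- `λ_max = max_j λ_j`. -/
def lamMax {d : ℕ} (lam : Fin d → ℝ) : ℝ := sSup (Set.range lam)

/-- `b_p = (1/2) ∧ (1 - 1/p)`  (with the convention `p.toReal = 0` for `p = ∞`). -/
def bp (p : ℝ≥0∞) : ℝ := min (1 / 2) (1 - 1 / p.toReal)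

/-- The constant `c_p` of the bandwidth grid. -/
def cpGrid {d : ℕ} (lam : Fin d → ℝ) (p : ℝ≥0∞) : ℝ :=
  min 1 ((p.toReal / Real.exp 1 * (1 + lamMax lam * max 2 (p.toReal / (p.toReal - 1))))
    ^ (-(p.toReal * (bp p + lamMax lam))))

/-- Minimal bandwidth `h_min^{(p)}`. -/
def hminG (p : ℝ≥0∞) (n : ℕ) (m : ℕ) : ℝ :=
  if p = ⊤ then (n : ℝ)⁻¹ else (n : ℝ) ^ (-(max 1 (p.toReal / m)))

/-- Maximal bandwidth `h_max^{(p)}`. -/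
def hmaxG (p : ℝ≥0∞) (n : ℕ) (m : ℕ) : ℝ :=
  if p = ⊤ then 1 else (Real.log n) ^ (-(p.toReal / m))

/-- Membership in the dyadic bandwidth set `H_{p,I}` (only the coordinates in `I` matter). -/
def memGrid {d : ℕ} (lam : Fin d → ℝ) (p : ℝ≥0∞) (n : ℕ) (I : Finset (Fin d))
    (h : Fin d → ℝ) : Prop :=
  (∀ j ∈ I, ∃ k : ℕ, 1 ≤ k ∧ h j = 2 ^ (-(k : ℝ))) ∧
  (∀ j ∈ I, hminG p n I.card ≤ h j ∧ h j ≤ hmaxG p n I.card) ∧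
  ((if p = ⊤ then Real.sqrt (Real.log n) else cpGrid lam p) ≤
    ((n : ℝ) * ∏ j ∈ I, h j) ^ bp p * ∏ j ∈ I, h j ^ lam j)

/-- The majorant `U_p(h_I)`. -/
def Up {d : ℕ} (K : ℝ → ℝ) (q : (Fin d → ℝ) → ℝ) (lam : Fin d → ℝ) (p : ℝ≥0∞) (n : ℕ)
    (I : Finset (Fin d)) (h : Fin d → ℝ) : ℝ≥0∞ :=
  if p = ⊤ then
    ENNReal.ofReal ((n : ℝ) ^ (-(1 : ℝ) / 2) * Real.sqrt (Real.log n) *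
      ∏ j ∈ I, h j ^ (-lam j - 1 / 2))
  else if p = 2 then
    ENNReal.ofReal ((n : ℝ) ^ (-(1 : ℝ) / 2) * ∏ j ∈ I, h j ^ (-lam j - 1 / 2))
  else if p.toReal < 2 then
    ENNReal.ofReal ((n : ℝ) ^ (1 / p.toReal - 1)) * eLpNorm (Lh I K q h) p volume
  else
    ENNReal.ofReal ((n : ℝ) ^ (-(1 : ℝ) / 2)) *
      (ENNReal.ofReal (∏ j ∈ I, h j ^ (-lam j - 1 / 2)) +
        ENNReal.ofReal (Real.sqrt (Real.log n)) *
          eLpNorm (Lh I K q h) (ENNReal.ofReal (2 * p.toReal / (p.toReal + 2))) volume)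

/-- First-order partial derivative in direction `j` of a complex-valued function. -/
def cpd {ι : Type} [Fintype ι] [DecidableEq ι] (j : ι) (φ : (ι → ℝ) → ℂ) (t : ι → ℝ) : ℂ :=
  fderiv ℝ φ t (Pi.single j 1)

/-- Iterated mixed partial derivative `D^α φ`. -/
def multiPD {ι : Type} [Fintype ι] [DecidableEq ι] (α : ι → ℕ) (φ : (ι → ℝ) → ℂ) :
    (ι → ℝ) → ℂ :=
  (Finset.univ (α := ι)).toList.foldr (fun j ψ => (cpd j)^[α j] ψ) φ

/-- Assumption (N2), case `p = 2`: lower bound on `|q̂_I|`. -/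
def N2two {d : ℕ} (I : Finset (Fin d)) (q : (Fin d → ℝ) → ℝ) (A : ℝ) (lam : Fin d → ℝ) :
    Prop :=
  ∀ t : I → ℝ, A⁻¹ * ∏ j : I, (1 + t j ^ 2) ^ (-lam ↑j / 2) ≤ ‖ftI (marginal I q) t‖

/-- Assumption (N2), case `p ∈ (1,∞) \ {2}`. -/
def N2mid {d : ℕ} (I : Finset (Fin d)) (q : (Fin d → ℝ) → ℝ) (A : ℝ) (lam : Fin d → ℝ) :
    Prop :=
  (∀ t : I → ℝ, ftI (marginal I q) t ≠ 0) ∧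
  ContDiff ℝ I.card (fun t : I → ℝ => (ftI (marginal I q) t)⁻¹) ∧
  ∀ α : I → ℕ, (∑ j, α j) ≤ I.card → ∀ t : I → ℝ,
    ‖multiPD α (fun u => (ftI (marginal I q) u)⁻¹) t * ∏ j, (t j : ℂ) ^ α j‖ ≤
      A * ∏ j : I, (1 + t j ^ 2) ^ (lam ↑j / 2)

/-- Assumption (N2), case `p = ∞`. -/
def N2inf {d : ℕ} (I : Finset (Fin d)) (q : (Fin d → ℝ) → ℝ) (A : ℝ) (lam : Fin d → ℝ) :
    Prop :=
  (∀ t : I → ℝ, ftI (marginal I q) t ≠ 0) ∧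
  ContDiff ℝ 1 (fun t : I → ℝ => (ftI (marginal I q) t)⁻¹) ∧
  ∀ k : I, ∀ a : ℕ, a ≤ 1 → ∀ t : I → ℝ,
    ‖(cpd k)^[a] (fun u => (ftI (marginal I q) u)⁻¹) t‖ ≤
      A * ∏ j : I, (1 + t j ^ 2) ^ (lam ↑j / 2)

/-- Assumptions (N1)-(N2) of the paper, for a given `p` and a given block `I`. -/
def N1N2 {d : ℕ} (p : ℝ≥0∞) (I : Finset (Fin d)) (q : (Fin d → ℝ) → ℝ) (A : ℝ)
    (lam : Fin d → ℝ) : Prop :=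
  0 < A ∧ (∀ j, 0 < lam j) ∧
  (p = 2 → Integrable (ftI (marginal I q)) ∧ N2two I q A lam) ∧
  (2 < p → eLpNorm (marginal I q) ⊤ volume < ⊤) ∧
  (p ≠ 2 → p ≠ ⊤ → N2mid I q A lam) ∧
  (p = ⊤ → N2inf I q A lam)

/-- `K` is a symmetric Schwartz kernel integrating to one. -/
def IsKernel (K : ℝ → ℝ) : Prop :=
  (∃ KS : SchwartzMap ℝ ℝ, ⇑KS = K) ∧ (∀ z, K (-z) = K z) ∧ (∫ z, K z) = 1

/-- `⌊a⌋`, the largest integer strictly smaller than `a` (for `a > 0`). -/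
def flr (a : ℝ) : ℕ := ⌈a⌉₊ - 1

/-- Partial derivative in direction `j` of a real function on `ℝ^ι`. -/
def rpd {ι : Type} [Fintype ι] [DecidableEq ι] (j : ι) (g : (ι → ℝ) → ℝ) (x : ι → ℝ) : ℝ :=
  fderiv ℝ g x (Pi.single j 1)

/-- The anisotropic Nikolskii class `N_{r,s}(β,L)` of probability densities. -/
def Nikolskii {ι : Type} [Fintype ι] [DecidableEq ι] (r : ι → ℝ≥0∞) (β L : ι → ℝ) :
    Set ((ι → ℝ) → ℝ) :=
  {g | IsDensity g ∧
    (∀ j, ∀ k ≤ flr (β j), eLpNorm ((rpd j)^[k] g) (r j) volume ≤ ENNReal.ofReal (L j)) ∧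
    (∀ j, ∀ z : ℝ,
      eLpNorm (fun x => (rpd j)^[flr (β j)] g (x + z • (Pi.single j 1 : ι → ℝ)) -
        (rpd j)^[flr (β j)] g x) (r j) volume ≤
          ENNReal.ofReal (L j * |z| ^ (β j - flr (β j))))}

/-- Partitions of `{1,…,d}`. -/
abbrev Part (d : ℕ) := Finpartition (Finset.univ : Finset (Fin d))

/-- The operation `P ⋄ P'` on partitions. -/
def diamond {d : ℕ} (P P' : Part d) : Finset (Finset (Fin d)) :=
  ((P.parts ×ˢ P'.parts).image fun z => z.1 ∩ z.2).filter fun I => I.Nonempty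

/-- The class `N_{r,d}(β,L,P)` taking smoothness and independence structure into account. -/
def NikolskiiP {d : ℕ} (𝔓 : Set (Part d)) (r : Fin d → ℝ≥0∞) (β L : Fin d → ℝ) (P : Part d) :
    Set ((Fin d → ℝ) → ℝ) :=
  {g | IsDensity g ∧ (∀ x, g x = ∏ I ∈ P.parts, marginal I g fun j => x ↑j) ∧
    ∀ P' ∈ 𝔓, ∀ P'' ∈ 𝔓, ∀ I ∈ diamond P' P'',
      marginal I g ∈
        Nikolskii (fun j : I => r ↑j) (fun j : I => β ↑j) (fun j : I => L ↑j)}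

/-- The set of partitions encoding an independence structure of `f`. -/
def structSet {d : ℕ} (𝔓 : Set (Part d)) (f : (Fin d → ℝ) → ℝ) : Set (Part d) :=
  {P ∈ 𝔓 | ∀ x, f x = ∏ I ∈ P.parts, marginal I f fun j => x ↑j}

/-- The set `H_p[𝔓]` of admissible pairs `(h,P)`. -/
def HpSet {d : ℕ} (lam : Fin d → ℝ) (p : ℝ≥0∞) (n : ℕ) (𝔓 : Set (Part d)) :
    Set ((Fin d → ℝ) × Part d) :=
  {hP | hP.2 ∈ 𝔓 ∧ ∀ I ∈ hP.2.parts, memGrid lam p n I hP.1}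

/-- The product estimator `f̃_{(h,P)}`. -/
def fHatProd {d : ℕ} (K : ℝ → ℝ) (q : (Fin d → ℝ) → ℝ) {n : ℕ}
    (hP : (Fin d → ℝ) × Part d) (y : Fin n → Fin d → ℝ) (x : Fin d → ℝ) : ℂ :=
  ∏ I ∈ hP.2.parts, fHat I K q hP.1 y fun j => x ↑j

/-- Smoothed estimator `f̃_{h_I,η_I} = K_{η_I} ⋆ f̃_{h_I}`. -/
def fHatConv {d : ℕ} (K : ℝ → ℝ) (q : (Fin d → ℝ) → ℝ) (I : Finset (Fin d))
    (h η : Fin d → ℝ) {n : ℕ} (y : Fin n → Fin d → ℝ) (xI : I → ℝ) : ℂ :=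
  ∫ u : I → ℝ, ((Kh I K η u : ℝ) : ℂ) * fHat I K q h y fun j => xI j - u j

/-- Auxiliary estimator `f̃_{(h,P),(η,P')}`. -/
def fHatProdAux {d : ℕ} (K : ℝ → ℝ) (q : (Fin d → ℝ) → ℝ) {n : ℕ}
    (hP ηP' : (Fin d → ℝ) × Part d) (y : Fin n → Fin d → ℝ) (x : Fin d → ℝ) : ℂ :=
  ∏ I ∈ diamond hP.2 ηP'.2, fHatConv K q I hP.1 ηP'.1 y fun j => x ↑j

/-- `𝔡 = sup_{P ∈ 𝔓} |P|`. -/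
def Dd {d : ℕ} (𝔓 : Set (Part d)) : ℕ := sSup ((fun P : Part d => P.parts.card) '' 𝔓)

/-- The random quantity `Ḡ_p`. -/
def Gbar {d : ℕ} (K : ℝ → ℝ) (q : (Fin d → ℝ) → ℝ) (lam : Fin d → ℝ) (p : ℝ≥0∞)
    (𝔓 : Set (Part d)) {n : ℕ} (y : Fin n → Fin d → ℝ) : ℝ≥0∞ :=
  max 1 (ENNReal.ofReal ((∫ z, |K z|) ^ d) *
    ⨆ hP ∈ HpSet lam p n 𝔓, ⨆ P' ∈ 𝔓, ⨆ I ∈ diamond hP.2 P',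
      eLpNorm (fHat I K q hP.1 y) p volume)

/-- The random threshold `Λ_p = 𝔡 γ_p Ḡ_p^{𝔡(𝔡-1)}`. -/
def LamThr {d : ℕ} (K : ℝ → ℝ) (q : (Fin d → ℝ) → ℝ) (lam : Fin d → ℝ) (p : ℝ≥0∞)
    (𝔓 : Set (Part d)) (γp : ℝ≥0∞) {n : ℕ} (y : Fin n → Fin d → ℝ) : ℝ≥0∞ :=
  (Dd 𝔓 : ℝ≥0∞) * γp * Gbar K q lam p 𝔓 y ^ (Dd 𝔓 * (Dd 𝔓 - 1))

/-- `U_p(h,P) = sup_{I ∈ P} U_p(h_I)`. -/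
def UpPart {d : ℕ} (K : ℝ → ℝ) (q : (Fin d → ℝ) → ℝ) (lam : Fin d → ℝ) (p : ℝ≥0∞) (n : ℕ)
    (hP : (Fin d → ℝ) × Part d) : ℝ≥0∞ :=
  ⨆ I ∈ hP.2.parts, Up K q lam p n I hP.1

/-- The quantity `Δ̃_p(h,P)` of the selection rule. -/
def DeltaT {d : ℕ} (K : ℝ → ℝ) (q : (Fin d → ℝ) → ℝ) (lam : Fin d → ℝ) (p : ℝ≥0∞)
    (𝔓 : Set (Part d)) (γp : ℝ≥0∞) {n : ℕ} (y : Fin n → Fin d → ℝ)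
    (hP : (Fin d → ℝ) × Part d) : ℝ≥0∞ :=
  ⨆ ηP' ∈ HpSet lam p n 𝔓,
    (eLpNorm (fun x => fHatProdAux K q hP ηP' y x - fHatProd K q ηP' y x) p volume -
      LamThr K q lam p 𝔓 γp y * UpPart K q lam p n ηP')

/-- The selection criterion. -/
def crit {d : ℕ} (K : ℝ → ℝ) (q : (Fin d → ℝ) → ℝ) (lam : Fin d → ℝ) (p : ℝ≥0∞)
    (𝔓 : Set (Part d)) (γp : ℝ≥0∞) {n : ℕ} (y : Fin n → Fin d → ℝ)
    (hP : (Fin d → ℝ) × Part d) : ℝ≥0∞ :=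
  DeltaT K q lam p 𝔓 γp y hP + LamThr K q lam p 𝔓 γp y * UpPart K q lam p n hP

/-- `(h̃,P̃)` obeys the data-driven selection rule. -/
def IsSelection {d : ℕ} (K : ℝ → ℝ) (q : (Fin d → ℝ) → ℝ) (lam : Fin d → ℝ) (p : ℝ≥0∞)
    (𝔓 : Set (Part d)) (γp : ℝ≥0∞) {n : ℕ}
    (sel : (Fin n → Fin d → ℝ) → (Fin d → ℝ) × Part d) : Prop :=
  ∀ y, sel y ∈ HpSet lam p n 𝔓 ∧
    crit K q lam p 𝔓 γp y (sel y) = ⨅ hP ∈ HpSet lam p n 𝔓, crit K q lam p 𝔓 γp y hP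

/-- `L_p`-risk of the selected estimator `f̃ = f̃_{(h̃,P̃)}` (`E_f ‖f̃ - f‖_∞` for `p = ∞`). -/
def riskSel {d : ℕ} (K : ℝ → ℝ) (q : (Fin d → ℝ) → ℝ) (p : ℝ≥0∞) {n : ℕ}
    (sel : (Fin n → Fin d → ℝ) → (Fin d → ℝ) × Part d) (f : (Fin d → ℝ) → ℝ) : ℝ≥0∞ :=
  if p = ⊤ then
    ∫⁻ y, eLpNorm (fun x => fHatProd K q (sel y) y x - (f x : ℂ)) ⊤ volume
      ∂obsMeasure d n f q
  else
    (∫⁻ y, eLpNorm (fun x => fHatProd K q (sel y) y x - (f x : ℂ)) p volume ^ p.toReal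
      ∂obsMeasure d n f q) ^ (1 / p.toReal)

/-- The oracle risk `R_p[(h,P),f]`. -/
def riskOracle {d : ℕ} (K : ℝ → ℝ) (q : (Fin d → ℝ) → ℝ) (p : ℝ≥0∞) (𝔓 : Set (Part d))
    (n : ℕ) (hP : (Fin d → ℝ) × Part d) (f : (Fin d → ℝ) → ℝ) : ℝ≥0∞ :=
  if p = ⊤ then
    ∫⁻ y, (⨆ P' ∈ 𝔓, ⨆ I ∈ diamond hP.2 P',
      eLpNorm (fun xI => fHat I K q hP.1 y xI - (marginal I f xI : ℂ)) ⊤ volume)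
      ∂obsMeasure d n f q
  else
    (∫⁻ y, (⨆ P' ∈ 𝔓, ⨆ I ∈ diamond hP.2 P',
      eLpNorm (fun xI => fHat I K q hP.1 y xI - (marginal I f xI : ℂ)) p volume) ^ p.toReal
      ∂obsMeasure d n f q) ^ (1 / p.toReal)

/-- `f_p = 1 ∨ sup_{P,P' ∈ 𝔓} sup_{I ∈ P⋄P'} ‖f_I‖_p` (as an extended real). -/
def fpE {d : ℕ} (p : ℝ≥0∞) (𝔓 : Set (Part d)) (f : (Fin d → ℝ) → ℝ) : ℝ≥0∞ :=
  max 1 (⨆ P ∈ 𝔓, ⨆ P' ∈ 𝔓, ⨆ I ∈ diamond P P', eLpNorm (marginal I f) p volume)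

open scoped FourierTransform SchwartzMap

/-! ### Plancherel's theorem on `L¹ ∩ L²` -/

section Plancherel

variable {E F : Type*} [NormedAddCommGroup E] [InnerProductSpace ℝ E] [FiniteDimensional ℝ E]
  [MeasurableSpace E] [BorelSpace E]

theorem continuous_fourier_of_integrable [NormedAddCommGroup F] [NormedSpace ℂ F] {f : E → F}
    (hf : Integrable f) : Continuous (𝓕 f) :=
  VectorFourier.fourierIntegral_continuous Real.continuous_fourierChar continuous_inner hf

theorem integral_fourier_smul_eq_of_integrable [NormedAddCommGroup F] [NormedSpace ℂ F]
    [CompleteSpace F] {φ : E → ℂ} {f : E → F} (hφ : Integrable φ) (hf : Integrable f) :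
    ∫ x, 𝓕 φ x • f x = ∫ x, φ x • 𝓕 f x := by
  have h := VectorFourier.integral_fourierIntegral_smul_eq_flip (L := innerₗ E)
    Real.continuous_fourierChar continuous_inner hφ hf
  rwa [flip_innerₗ] at h

variable [NormedAddCommGroup F] [InnerProductSpace ℂ F] [CompleteSpace F]

-- Both sides are the distributional Fourier transform of `f`, so they agree on test functions.
theorem fourier_toLp_ae_eq {f : E → F} (hf : Integrable f) (hf₂ : MemLp f 2) :
    (𝓕 (hf₂.toLp f) : Lp F 2 (volume : Measure E)) =ᵐ[volume] 𝓕 f := by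
  set Ff : Lp F 2 (volume : Measure E) := 𝓕 (hf₂.toLp f)
  refine ae_eq_of_integral_contDiff_smul_eq ((Lp.memLp Ff).locallyIntegrable one_le_two)
    (continuous_fourier_of_integrable hf).locallyIntegrable fun g hg hgc => ?_
  have hgc' : HasCompactSupport (Complex.ofRealCLM ∘ g) := hgc.comp_left rfl
  let φ : 𝓢(E, ℂ) := hgc'.toSchwartzMap (by fun_prop)
  calc ∫ x, g x • Ff x
    _ = ∫ x, φ x • Ff x := by simp [φ]
    _ = ∫ x, 𝓕 φ x • hf₂.toLp f x := by
      simpa only [TemperedDistribution.fourier_apply, Lp.toTemperedDistribution_apply] using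
        (DFunLike.congr_fun (Lp.fourier_toTemperedDistribution_eq (hf₂.toLp f)) φ).symm
    _ = ∫ x, 𝓕 φ x • f x := by
      refine integral_congr_ae ?_
      filter_upwards [hf₂.coeFn_toLp] with x hx
      rw [hx]
    _ = ∫ x, φ x • 𝓕 f x := integral_fourier_smul_eq_of_integrable φ.integrable hf
    _ = ∫ x, g x • 𝓕 f x := by simp [φ]

theorem eLpNorm_two_fourier {f : E → F} (hf : Integrable f) (hf₂ : MemLp f 2) :
    eLpNorm (𝓕 f) 2 volume = eLpNorm f 2 volume := by
  rw [← eLpNorm_congr_ae (fourier_toLp_ae_eq hf hf₂), ← Lp.enorm_def, ← ofReal_norm,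
    Lp.norm_fourier_eq, ofReal_norm, Lp.enorm_toLp hf₂]

end Plancherel

/-! ### Coordinatewise dilations and tensor products -/

section Dilation

theorem measurableEmbedding_pi_mul_left {ι : Type*} {D : ι → ℝ} (hD : ∀ j, D j ≠ 0) :
    MeasurableEmbedding fun t : ι → ℝ => D * t :=
  (MeasurableEquiv.piCongrRight fun j => MeasurableEquiv.mulLeft₀ (D j) (hD j)).measurableEmbedding

variable {ι E : Type*} [Fintype ι] [NormedAddCommGroup E] {D : ι → ℝ}

theorem map_pi_mul_left_volume (hD : ∀ j, D j ≠ 0) :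
    Measure.map (fun t : ι → ℝ => D * t) volume = ENNReal.ofReal |∏ j, D j|⁻¹ • volume := by
  classical
  have hpos : 0 < |∏ j, D j| := abs_pos.2 (Finset.prod_ne_zero_iff.2 fun j _ => hD j)
  have hmap := Real.smul_map_diagonal_volume_pi (D := D)
    (by rw [Matrix.det_diagonal]; exact abs_pos.1 hpos)
  have hdiag : ⇑(Matrix.toLin' (Matrix.diagonal D)) = fun t => D * t := by
    ext t j
    simp [Matrix.mulVec_diagonal]
  rw [Matrix.det_diagonal, hdiag] at hmap
  conv_rhs => rw [← hmap]
  rw [smul_smul, ← ENNReal.ofReal_mul (by positivity), inv_mul_cancel₀ hpos.ne',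
    ENNReal.ofReal_one, one_smul]

theorem integral_comp_pi_mul_left [NormedSpace ℝ E] (hD : ∀ j, D j ≠ 0) (f : (ι → ℝ) → E) :
    ∫ t, f (D * t) = |∏ j, D j|⁻¹ • ∫ t, f t := by
  rw [← (measurableEmbedding_pi_mul_left hD).integral_map f, map_pi_mul_left_volume hD,
    integral_smul_measure, ENNReal.toReal_ofReal (by positivity)]

theorem eLpNorm_comp_pi_mul_left (hD : ∀ j, D j ≠ 0) (f : (ι → ℝ) → E) (p : ℝ≥0∞) :
    eLpNorm (fun t => f (D * t)) p volume =
      ENNReal.ofReal (∏ j, |D j| ^ (-(1 / p).toReal)) * eLpNorm f p volume := by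
  have hpos : 0 < |∏ j, D j| := abs_pos.2 (Finset.prod_ne_zero_iff.2 fun j _ => hD j)
  have hscale : ENNReal.ofReal |∏ j, D j|⁻¹ ≠ 0 := by simpa using hpos
  have hconst : ENNReal.ofReal |∏ j, D j|⁻¹ ^ (1 / p).toReal =
      ENNReal.ofReal (∏ j, |D j| ^ (-(1 / p).toReal)) := by
    rw [ENNReal.ofReal_rpow_of_pos (inv_pos.2 hpos), Real.inv_rpow hpos.le,
      ← Real.rpow_neg hpos.le, Finset.abs_prod,
      Real.finsetProd_rpow _ _ fun j _ => abs_nonneg (D j)]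
  rw [← hconst, ← smul_eq_mul, ← eLpNorm_smul_measure_of_ne_zero hscale,
    ← map_pi_mul_left_volume hD, (measurableEmbedding_pi_mul_left hD).eLpNorm_map_measure,
    Function.comp_def]

theorem memLp_pi_prod {𝕜 X : Type*} [NontriviallyNormedField 𝕜] {mX : MeasurableSpace X}
    {μ : ι → Measure X} [∀ j, SigmaFinite (μ j)] {f : ι → X → 𝕜} {p : ℝ≥0∞} (hp₀ : p ≠ 0)
    (hp : p ≠ ⊤) (hf : ∀ j, MemLp (f j) p (μ j)) :
    MemLp (fun x : ι → X => ∏ j, f j (x j)) p (Measure.pi μ) := by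
  have hmeas : AEStronglyMeasurable (fun x : ι → X => ∏ j, f j (x j)) (Measure.pi μ) :=
    Finset.aestronglyMeasurable_fun_prod _ fun j _ =>
      (hf j).aestronglyMeasurable.comp_quasiMeasurePreserving
        (Measure.quasiMeasurePreserving_eval μ j)
  rw [← integrable_norm_rpow_iff hmeas hp₀ hp]
  simp_rw [norm_prod, ← Real.finsetProd_rpow _ _ fun _ _ => norm_nonneg _]
  exact Integrable.fintype_prod (f := fun j x => ‖f j x‖ ^ p.toReal) fun j =>
    (integrable_norm_rpow_iff (hf j).aestronglyMeasurable hp₀ hp).2 (hf j)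

end Dilation

/-! ### The Fourier transform `ftI` and its inverse -/

section FourierTransform

variable {ι : Type} [Fintype ι]

theorem continuous_ftI {g : (ι → ℝ) → ℝ} (hg : Integrable g) : Continuous (ftI g) := by
  refine continuous_of_dominated (bound := fun x => ‖g x‖) (fun t => ?_) (fun t => ?_) hg.norm ?_
  · exact AEStronglyMeasurable.mul (Continuous.aestronglyMeasurable (by unfold dotp; fun_prop))
      hg.ofReal.aestronglyMeasurable
  · refine ae_of_all _ fun x => ?_
    rw [norm_mul, Complex.norm_exp_I_mul_ofReal, one_mul, Complex.norm_real]
  · exact ae_of_all _ fun x => by unfold dotp; fun_prop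

-- The Bochner integral of a non-integrable function is `0`.
theorem integrable_of_ftI_zero_ne_zero {g : (ι → ℝ) → ℝ} (hg : ftI g 0 ≠ 0) : Integrable g := by
  contrapose! hg
  simp [ftI, dotp, integral_complex_ofReal, integral_undef hg]

theorem ftI_comp_div {h : ι → ℝ} (hh : ∀ j, h j ≠ 0) (g : (ι → ℝ) → ℝ) (t : ι → ℝ) :
    ftI (fun x => (∏ j, |h j|)⁻¹ * g (x / h)) t = ftI g (h * t) := by
  have hpos : (∏ j, |h j|) ≠ 0 := Finset.prod_ne_zero_iff.2 fun j _ => abs_ne_zero.2 (hh j)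
  have hdot (x : ι → ℝ) : dotp (h * t) (h⁻¹ * x) = dotp t x :=
    Finset.sum_congr rfl fun j _ => by simp only [Pi.mul_apply, Pi.inv_apply]; field_simp [hh j]
  have hsub := integral_comp_pi_mul_left (D := h⁻¹) (fun j => inv_ne_zero (hh j)) fun y =>
    Complex.exp (Complex.I * (dotp (h * t) y : ℝ)) * (g y : ℂ)
  simp only [hdot, Pi.inv_apply, Finset.prod_inv_distrib, abs_inv, inv_inv, Finset.abs_prod]
    at hsub
  calc ftI (fun x => (∏ j, |h j|)⁻¹ * g (x / h)) t
    _ = ∫ x, (∏ j, |h j|)⁻¹ • (Complex.exp (Complex.I * (dotp t x : ℝ)) * (g (h⁻¹ * x) : ℂ)) := by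
      refine integral_congr_ae (ae_of_all _ fun x => ?_)
      simp only [div_eq_inv_mul, Complex.ofReal_mul, Complex.real_smul, mul_left_comm]
    _ = ftI g (h * t) := by
      rw [integral_smul, hsub, smul_smul, inv_mul_cancel₀ hpos, one_smul, ftI]

theorem ftI_prod (u : ι → ℝ → ℝ) (t : ι → ℝ) :
    ftI (fun x => ∏ j, u j (x j)) t =
      ∏ j, 𝓕 (fun x => (u j x : ℂ)) (-(2 * Real.pi)⁻¹ * t j) := by
  have hfourier (j : ι) : 𝓕 (fun x => (u j x : ℂ)) (-(2 * Real.pi)⁻¹ * t j) =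
      ∫ x, Complex.exp (Complex.I * ((t j * x : ℝ) : ℂ)) * (u j x : ℂ) := by
    rw [Real.fourier_real_eq_integral_exp_smul]
    refine integral_congr_ae (ae_of_all _ fun x => ?_)
    simp only [smul_eq_mul]
    congr 2
    push_cast
    field_simp [Complex.ofReal_ne_zero.2 Real.pi_ne_zero]
  simp_rw [hfourier]
  rw [← integral_fintype_prod_volume_eq_prod
    (fun j x => Complex.exp (Complex.I * ((t j * x : ℝ) : ℂ)) * (u j x : ℂ)), ftI]
  simp only [Finset.prod_mul_distrib, ← Complex.exp_sum, ← Finset.mul_sum, dotp,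
    Complex.ofReal_sum, Complex.ofReal_prod]

/-- The inverse of the Fourier transform `ftI`, on complex-valued functions. -/
def ftInv (G : (ι → ℝ) → ℂ) (x : ι → ℝ) : ℂ :=
  (((2 * Real.pi) ^ (-(Fintype.card ι : ℝ)) : ℝ) : ℂ) *
    ∫ t : ι → ℝ, Complex.exp (-(Complex.I * (dotp t x : ℝ))) * G t

theorem ftInv_eq_fourier (G : (ι → ℝ) → ℂ) (x : ι → ℝ) :
    ftInv G x = (((2 * Real.pi) ^ (-(Fintype.card ι : ℝ)) : ℝ) : ℂ) *
      𝓕 (fun y : EuclideanSpace ℝ ι => G y.ofLp)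
        (WithLp.toLp 2 ((fun _ => (2 * Real.pi)⁻¹) * x)) := by
  have hinner (t : ι → ℝ) : inner ℝ (WithLp.toLp 2 t)
      (WithLp.toLp 2 ((fun _ => (2 * Real.pi)⁻¹) * x)) = (2 * Real.pi)⁻¹ * dotp t x := by
    simp only [PiLp.inner_apply, dotp, Finset.mul_sum, Pi.mul_apply, RCLike.inner_apply,
      conj_trivial]
    exact Finset.sum_congr rfl fun j _ => by ring
  rw [ftInv, Real.fourier_eq', ← (PiLp.volume_preserving_toLp ι).integral_comp
    (MeasurableEquiv.toLp 2 (ι → ℝ)).measurableEmbedding]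
  congr 2 with t
  rw [hinner, smul_eq_mul]
  congr 2
  push_cast
  field_simp [Complex.ofReal_ne_zero.2 Real.pi_ne_zero]

theorem eLpNorm_two_fourier_toLp {G : (ι → ℝ) → ℂ} (hG : Integrable G) (hG₂ : MemLp G 2) :
    eLpNorm (fun x => 𝓕 (fun y : EuclideanSpace ℝ ι => G y.ofLp) (WithLp.toLp 2 x)) 2 volume =
      eLpNorm G 2 volume := by
  have hofLp := PiLp.volume_preserving_ofLp ι
  have hint : Integrable fun y : EuclideanSpace ℝ ι => G y.ofLp :=
    hofLp.integrable_comp_of_integrable hG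
  calc eLpNorm (fun x => 𝓕 (fun y : EuclideanSpace ℝ ι => G y.ofLp) (WithLp.toLp 2 x)) 2 volume
    _ = eLpNorm (𝓕 fun y : EuclideanSpace ℝ ι => G y.ofLp) 2 volume :=
      eLpNorm_comp_measurePreserving
        (continuous_fourier_of_integrable hint).aestronglyMeasurable (PiLp.volume_preserving_toLp ι)
    _ = eLpNorm (fun y : EuclideanSpace ℝ ι => G y.ofLp) 2 volume :=
      eLpNorm_two_fourier hint (hG₂.comp_measurePreserving hofLp)
    _ = eLpNorm G 2 volume := eLpNorm_comp_measurePreserving hG.aestronglyMeasurable hofLp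

theorem eLpNorm_two_ftInv {G : (ι → ℝ) → ℂ} (hG : Integrable G) (hG₂ : MemLp G 2) :
    eLpNorm (ftInv G) 2 volume =
      ENNReal.ofReal ((2 * Real.pi) ^ (-(Fintype.card ι : ℝ) / 2)) * eLpNorm G 2 volume := by
  have h2π : 0 < 2 * Real.pi := by positivity
  set F : EuclideanSpace ℝ ι → ℂ := 𝓕 fun y : EuclideanSpace ℝ ι => G y.ofLp
  have hconst : (2 * Real.pi) ^ (-(Fintype.card ι : ℝ)) *
      ∏ _j : ι, |(2 * Real.pi)⁻¹| ^ (-(1 / (2 : ℝ≥0∞)).toReal) =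
        (2 * Real.pi) ^ (-(Fintype.card ι : ℝ) / 2) := by
    rw [abs_of_pos (inv_pos.2 h2π), Finset.prod_const, Finset.card_univ, ← Real.rpow_natCast,
      Real.inv_rpow h2π.le, ← Real.rpow_neg h2π.le, ← Real.rpow_mul h2π.le, ← Real.rpow_add h2π]
    congr 1
    simp only [one_div, ENNReal.toReal_inv, ENNReal.toReal_ofNat]
    ring
  have hscale := eLpNorm_comp_pi_mul_left (D := fun _ : ι => (2 * Real.pi)⁻¹)
    (fun _ => inv_ne_zero h2π.ne') (fun x => F (WithLp.toLp 2 x)) 2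
  calc eLpNorm (ftInv G) 2 volume
    _ = eLpNorm ((((2 * Real.pi) ^ (-(Fintype.card ι : ℝ)) : ℝ) : ℂ) • fun x =>
        F (WithLp.toLp 2 ((fun _ => (2 * Real.pi)⁻¹) * x))) 2 volume := by
      congr 1 with x
      exact ftInv_eq_fourier G x
    _ = ENNReal.ofReal ((2 * Real.pi) ^ (-(Fintype.card ι : ℝ) / 2)) * eLpNorm G 2 volume := by
      rw [eLpNorm_const_smul, hscale, eLpNorm_two_fourier_toLp hG hG₂, ← mul_assoc, ← hconst,
        ENNReal.ofReal_mul (by positivity), ← ofReal_norm, Complex.norm_real,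
        Real.norm_of_nonneg (by positivity)]

theorem eLpNorm_top_ftInv_le (G : (ι → ℝ) → ℂ) :
    eLpNorm (ftInv G) ⊤ volume ≤
      ENNReal.ofReal ((2 * Real.pi) ^ (-(Fintype.card ι : ℝ))) * eLpNorm G 1 volume := by
  rw [eLpNorm_exponent_top]
  refine eLpNormEssSup_le_of_ae_enorm_bound (ae_of_all _ fun x => ?_)
  have henorm (t : ι → ℝ) : ‖Complex.exp (-(Complex.I * (dotp t x : ℝ))) * G t‖ₑ = ‖G t‖ₑ := by
    rw [← mul_neg, ← Complex.ofReal_neg, enorm_mul, ← ofReal_norm, Complex.norm_exp_I_mul_ofReal,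
      ENNReal.ofReal_one, one_mul]
  calc ‖ftInv G x‖ₑ
    _ = ENNReal.ofReal ((2 * Real.pi) ^ (-(Fintype.card ι : ℝ))) *
        ‖∫ t, Complex.exp (-(Complex.I * (dotp t x : ℝ))) * G t‖ₑ := by
      rw [ftInv, enorm_mul, ← ofReal_norm, Complex.norm_real,
        Real.norm_of_nonneg (by positivity)]
    _ ≤ ENNReal.ofReal ((2 * Real.pi) ^ (-(Fintype.card ι : ℝ))) * eLpNorm G 1 volume := by
      gcongr
      refine (enorm_integral_le_lintegral_enorm _).trans_eq ?_
      simp_rw [henorm, eLpNorm_one_eq_lintegral_enorm]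

end FourierTransform

/-! ### Polynomial weights -/

section PolyWeight

variable {ι : Type*} [Fintype ι] {A : ℝ} {lam h : ι → ℝ}

/-- The weight `g_I(t) = ∏ (1 + t_j²)^{λ_j/2}`; Assumption (N2) says that its inverse, which is the
weight with exponents `-λ_j`, bounds `|q̂_I|` from below up to a constant. -/
def polyWeight (lam t : ι → ℝ) : ℝ := ∏ j, (1 + t j ^ 2) ^ (lam j / 2)

theorem polyWeight_pos (lam t : ι → ℝ) : 0 < polyWeight lam t :=
  Finset.prod_pos fun j _ => by positivity

theorem polyWeight_neg (lam t : ι → ℝ) : polyWeight (-lam) t = (polyWeight lam t)⁻¹ := by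
  rw [polyWeight, polyWeight, ← Finset.prod_inv_distrib]
  refine Finset.prod_congr rfl fun j _ => ?_
  rw [Pi.neg_apply, neg_div, Real.rpow_neg (by positivity)]

theorem one_add_sq_rpow_le {r l : ℝ} (hr : 0 < r) (hr₁ : r ≤ 1) (hl : 0 ≤ l) (s : ℝ) :
    (1 + s ^ 2) ^ (l / 2) ≤ r ^ (-l) * (1 + (r * s) ^ 2) ^ (l / 2) := by
  have hrl : r ^ l = (r ^ 2) ^ (l / 2) := by
    rw [← Real.rpow_natCast, ← Real.rpow_mul hr.le]
    congr 1
    push_cast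
    ring
  rw [Real.rpow_neg hr.le, le_inv_mul_iff₀ (by positivity), hrl,
    ← Real.mul_rpow (by positivity) (by positivity)]
  gcongr
  nlinarith [pow_le_one₀ hr.le hr₁ (n := 2)]

theorem polyWeight_le (hh : ∀ j, 0 < h j) (hh₁ : ∀ j, h j ≤ 1) (hlam : ∀ j, 0 ≤ lam j)
    (t : ι → ℝ) : polyWeight lam t ≤ (∏ j, h j ^ (-lam j)) * polyWeight lam (h * t) := by
  rw [polyWeight, polyWeight, ← Finset.prod_mul_distrib]
  exact Finset.prod_le_prod (fun j _ => by positivity) fun j _ =>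
    one_add_sq_rpow_le (hh j) (hh₁ j) (hlam j) (t j)

theorem norm_div_le_of_polyWeight_le (hA : 0 < A) (hh : ∀ j, 0 < h j) (hh₁ : ∀ j, h j ≤ 1)
    (hlam : ∀ j, 0 ≤ lam j) {t : ι → ℝ} (z : ℂ) {w : ℂ}
    (hw : A⁻¹ * polyWeight (-lam) t ≤ ‖w‖) :
    ‖z / w‖ ≤ A * (∏ j, h j ^ (-lam j)) * ‖z * polyWeight lam (h * t)‖ := by
  have hinv : ‖w‖⁻¹ ≤ A * polyWeight lam t := by
    rw [polyWeight_neg, ← mul_inv] at hw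
    exact inv_le_of_inv_le₀ (mul_pos hA (polyWeight_pos lam t)) hw
  calc ‖z / w‖
    _ = ‖z‖ * ‖w‖⁻¹ := by rw [norm_div, div_eq_mul_inv]
    _ ≤ ‖z‖ * (A * ((∏ j, h j ^ (-lam j)) * polyWeight lam (h * t))) := by
      gcongr
      exact hinv.trans (mul_le_mul_of_nonneg_left (polyWeight_le hh hh₁ hlam t) hA.le)
    _ = A * (∏ j, h j ^ (-lam j)) * ‖z * polyWeight lam (h * t)‖ := by
      rw [norm_mul, Complex.norm_real, Real.norm_of_nonneg (polyWeight_pos _ _).le]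
      ring

theorem eLpNorm_comp_mul_div_le (hA : 0 < A) (hh : ∀ j, 0 < h j) (hh₁ : ∀ j, h j ≤ 1)
    (hlam : ∀ j, 0 ≤ lam j) (f : (ι → ℝ) → ℂ) {φ : (ι → ℝ) → ℂ}
    (hφ : ∀ t, A⁻¹ * polyWeight (-lam) t ≤ ‖φ t‖) (p : ℝ≥0∞) :
    eLpNorm (fun t => f (h * t) / φ t) p volume ≤
      ENNReal.ofReal (A * ∏ j, h j ^ (-lam j - (1 / p).toReal)) *
        eLpNorm (fun t => f t * polyWeight lam t) p volume := by
  have hprod : 0 ≤ A * ∏ j, h j ^ (-lam j) :=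
    mul_nonneg hA.le (Finset.prod_nonneg fun j _ => Real.rpow_nonneg (hh j).le _)
  refine (eLpNorm_le_mul_eLpNorm_of_ae_le_mul (ae_of_all _ fun t =>
    norm_div_le_of_polyWeight_le hA hh hh₁ hlam (f (h * t)) (hφ t)) p).trans_eq ?_
  rw [eLpNorm_comp_pi_mul_left (fun j => (hh j).ne') (fun t => f t * (polyWeight lam t : ℂ)),
    ← mul_assoc, ← ENNReal.ofReal_mul hprod, mul_assoc, ← Finset.prod_mul_distrib]
  simp_rw [abs_of_pos (hh _), ← Real.rpow_add (hh _), sub_eq_add_neg]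

end PolyWeight

/-! ### Weighted Fourier transforms of Schwartz kernels -/

section WeightedFourier

/-- The Schwartz function `s ↦ K̂(s) (1 + s²)^{l/2}`. The convention `K̂(s) = ∫ e^{isx} K(x) dx`
corresponds to evaluating Mathlib's `𝓕 K` at `-s / (2π)`. -/
def weightedFourier (K : 𝓢(ℝ, ℝ)) (l : ℝ) : 𝓢(ℝ, ℂ) :=
  SchwartzMap.smulLeftCLM ℂ (fun s : ℝ => (1 + ‖s‖ ^ 2) ^ (l / 2)) <|
    SchwartzMap.compCLMOfContinuousLinearEquiv ℝ
      (ContinuousLinearEquiv.unitsEquivAut ℝ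
        (Units.mk0 (-(2 * Real.pi)⁻¹) (neg_ne_zero.2 (by positivity))))
      (𝓕 (K.postcompCLM (𝕜 := ℝ) Complex.ofRealCLM))

theorem weightedFourier_apply (K : 𝓢(ℝ, ℝ)) (l s : ℝ) :
    weightedFourier K l s =
      𝓕 (fun x => (K x : ℂ)) (-(2 * Real.pi)⁻¹ * s) * ((1 + s ^ 2) ^ (l / 2) : ℝ) := by
  rw [weightedFourier, SchwartzMap.smulLeftCLM_apply_apply
    (Function.hasTemperateGrowth_one_add_norm_sq_rpow ℝ (l / 2)), Real.norm_eq_abs, sq_abs,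
    Complex.real_smul, mul_comm, SchwartzMap.compCLMOfContinuousLinearEquiv_apply,
    SchwartzMap.fourier_coe, Function.comp_apply, ContinuousLinearEquiv.unitsEquivAut_apply,
    Units.val_mk0, mul_comm s]
  rfl

theorem weightedFourier_ne_zero {K : 𝓢(ℝ, ℝ)} (hK : K ≠ 0) (l : ℝ) : weightedFourier K l ≠ 0 := by
  contrapose! hK
  have hfourier : 𝓕 (K.postcompCLM (𝕜 := ℝ) Complex.ofRealCLM) = 0 := by
    ext s
    have hs := weightedFourier_apply K l (-(2 * Real.pi) * s)
    rw [hK, zero_apply, eq_comm, mul_eq_zero, Complex.ofReal_eq_zero,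
      or_iff_left (by positivity), ← mul_assoc, neg_mul_neg, inv_mul_cancel₀ (by positivity),
      one_mul] at hs
    exact hs
  ext x
  have hzero := (map_eq_zero_iff (FourierTransform.fourierCLE ℂ 𝓢(ℝ, ℂ))
    (FourierTransform.fourierCLE ℂ 𝓢(ℝ, ℂ)).injective).1 hfourier
  simpa using DFunLike.congr_fun hzero x

variable {ι : Type} [Fintype ι]

theorem ftI_prod_mul_polyWeight (K : ι → 𝓢(ℝ, ℝ)) (lam t : ι → ℝ) :
    ftI (fun x => ∏ j, K j (x j)) t * polyWeight lam t =
      ∏ j, weightedFourier (K j) (lam j) (t j) := by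
  simp only [ftI_prod (fun j => K j), polyWeight, Complex.ofReal_prod, ← Finset.prod_mul_distrib,
    weightedFourier_apply]

theorem memLp_ftI_prod_mul_polyWeight (K : ι → 𝓢(ℝ, ℝ)) (lam : ι → ℝ) {p : ℝ≥0∞} (hp₀ : p ≠ 0)
    (hp : p ≠ ⊤) : MemLp (fun t => ftI (fun x => ∏ j, K j (x j)) t * polyWeight lam t) p := by
  simp_rw [ftI_prod_mul_polyWeight]
  exact memLp_pi_prod hp₀ hp fun j => (weightedFourier (K j) (lam j)).memLp p

theorem eLpNorm_ftI_prod_mul_polyWeight_ne_zero {K : ι → 𝓢(ℝ, ℝ)} (hK : ∀ j, K j ≠ 0)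
    (lam : ι → ℝ) {p : ℝ≥0∞} (hp₀ : p ≠ 0) :
    eLpNorm (fun t => ftI (fun x => ∏ j, K j (x j)) t * polyWeight lam t) p volume ≠ 0 := by
  simp_rw [ftI_prod_mul_polyWeight]
  have hcont : Continuous fun t : ι → ℝ => ∏ j, weightedFourier (K j) (lam j) (t j) :=
    continuous_finsetProd _ fun j _ => (SchwartzMap.continuous _).comp (continuous_apply j)
  choose t ht using fun j => DFunLike.ne_iff.1 (weightedFourier_ne_zero (hK j) (lam j))
  rw [Ne, eLpNorm_eq_zero_iff hcont.aestronglyMeasurable hp₀,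
    Continuous.ae_eq_iff_eq volume hcont continuous_zero]
  exact fun hzero => Finset.prod_ne_zero_iff.2 (fun j _ => ht j) (congrFun hzero t)

end WeightedFourier

/-! ### The deconvolution kernel -/

section Deconvolution

theorem ofReal_mul_ofReal_mul_le {a b c M r : ℝ} {N : ℝ≥0∞} (ha : 0 ≤ a) (hr : 0 ≤ r)
    (hb : 0 ≤ b) (hbc : b ≤ c) (hN : N ≠ ⊤) (hNM : N.toReal ≤ M) :
    ENNReal.ofReal b * (ENNReal.ofReal (a * r) * N) ≤ ENNReal.ofReal (a * c * M * r) := by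
  have hc : 0 ≤ c := hb.trans hbc
  rw [← ENNReal.ofReal_toReal hN, ← ENNReal.ofReal_mul (by positivity), ← ENNReal.ofReal_mul hb]
  refine ENNReal.ofReal_le_ofReal ?_
  calc b * (a * r * N.toReal)
    _ ≤ c * (a * r * M) := by gcongr
    _ = a * c * M * r := by ring

variable {d : ℕ} {I : Finset (Fin d)} {K : 𝓢(ℝ, ℝ)} {q : (Fin d → ℝ) → ℝ} {A : ℝ}
  {lam h : Fin d → ℝ}

theorem ftI_Kh (hh : ∀ j ∈ I, 0 < h j) (K : ℝ → ℝ) (t : I → ℝ) :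
    ftI (Kh I K h) t = ftI (KI I K) ((fun j : I => h j) * t) := by
  rw [← ftI_comp_div fun j : I => (hh j j.2).ne']
  congr 1 with x
  rw [Kh, ← Finset.prod_coe_sort I]
  simp_rw [abs_of_pos (hh _ (Subtype.coe_prop _))]
  rfl

/-- The quotient `K̂_{h_I} / q̂_I`, of which the deconvolution kernel `L_{(h_I)}` is the inverse
Fourier transform. -/
def kernelSymbol (I : Finset (Fin d)) (K : ℝ → ℝ) (q : (Fin d → ℝ) → ℝ) (h : Fin d → ℝ)
    (t : I → ℝ) : ℂ :=
  ftI (Kh I K h) t / ftI (marginal I q) t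

theorem ftInv_kernelSymbol (I : Finset (Fin d)) (K : ℝ → ℝ) (q : (Fin d → ℝ) → ℝ)
    (h : Fin d → ℝ) : ftInv (kernelSymbol I K q h) = Lh I K q h := by
  ext x
  rw [ftInv, Fintype.card_coe]
  rfl

theorem N2two.integrable_marginal (hA : 0 < A) (hN2 : N2two I q A lam) :
    Integrable (marginal I q) := by
  refine integrable_of_ftI_zero_ne_zero (norm_pos_iff.1 ?_)
  exact (mul_pos (inv_pos.2 hA) (polyWeight_pos (fun j : I => -lam j) 0)).trans_le (hN2 0)

theorem eLpNorm_kernelSymbol_le (hA : 0 < A) (hlam : ∀ j ∈ I, 0 ≤ lam j) (hN2 : N2two I q A lam)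
    (hh : ∀ j ∈ I, 0 < h j ∧ h j ≤ 1) (K : ℝ → ℝ) (p : ℝ≥0∞) :
    eLpNorm (kernelSymbol I K q h) p volume ≤
      ENNReal.ofReal (A * ∏ j ∈ I, h j ^ (-lam j - (1 / p).toReal)) *
        eLpNorm (fun t : I → ℝ => ftI (KI I K) t * polyWeight (fun j : I => lam j) t) p volume := by
  have hsymbol : kernelSymbol I K q h =
      fun t => ftI (KI I K) ((fun j : I => h j) * t) / ftI (marginal I q) t :=
    funext fun t => by rw [kernelSymbol, ftI_Kh fun j hj => (hh j hj).1]
  rw [hsymbol, ← Finset.prod_coe_sort I]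
  exact eLpNorm_comp_mul_div_le hA (fun j : I => (hh j j.2).1) (fun j : I => (hh j j.2).2)
    (fun j : I => hlam j j.2) _ hN2 p

theorem memLp_kernelSymbol (hA : 0 < A) (hlam : ∀ j ∈ I, 0 ≤ lam j) (hN2 : N2two I q A lam)
    (hh : ∀ j ∈ I, 0 < h j ∧ h j ≤ 1) {p : ℝ≥0∞} (hp₀ : p ≠ 0) (hp : p ≠ ⊤) :
    MemLp (kernelSymbol I K q h) p := by
  have hK : Integrable (KI I K) :=
    Integrable.fintype_prod (f := fun _ : I => K) fun _ => K.integrable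
  have hnum : Continuous (ftI (Kh I K h)) := by
    rw [funext (ftI_Kh (fun j hj => (hh j hj).1) K)]
    exact (continuous_ftI hK).comp (continuous_const.mul continuous_id)
  have hden : Continuous (ftI (marginal I q)) := continuous_ftI (hN2.integrable_marginal hA)
  refine ⟨(hnum.measurable.div hden.measurable).aestronglyMeasurable, ?_⟩
  exact (eLpNorm_kernelSymbol_le hA hlam hN2 hh K p).trans_lt <| ENNReal.mul_lt_top
    ENNReal.ofReal_lt_top
    (memLp_ftI_prod_mul_polyWeight (fun _ : I => K) (fun j => lam j) hp₀ hp).eLpNorm_lt_top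

/-- The constant `C_I = A (2π)^{-|I|/2} max(‖K̂_I g_I‖_2, ‖K̂_I g_I‖_1)` of the norm bounds. -/
def kernelConst (I : Finset (Fin d)) (K : ℝ → ℝ) (A : ℝ) (lam : Fin d → ℝ) : ℝ :=
  A * (2 * Real.pi) ^ (-(I.card : ℝ) / 2) *
    max (eLpNorm (fun t : I → ℝ => ftI (KI I K) t * polyWeight (fun j : I => lam j) t) 2
        volume).toReal
      (eLpNorm (fun t : I → ℝ => ftI (KI I K) t * polyWeight (fun j : I => lam j) t) 1
        volume).toReal

theorem kernelConst_pos (hA : 0 < A) (hK : K ≠ 0) (I : Finset (Fin d)) (lam : Fin d → ℝ) :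
    0 < kernelConst I K A lam := by
  refine mul_pos (by positivity) (lt_max_of_lt_left (ENNReal.toReal_pos ?_ ?_))
  · exact eLpNorm_ftI_prod_mul_polyWeight_ne_zero (fun _ : I => hK) _ two_ne_zero
  · exact (memLp_ftI_prod_mul_polyWeight (fun _ : I => K) _ two_ne_zero ofNat_ne_top).eLpNorm_ne_top

theorem eLpNorm_two_Lh_le (hA : 0 < A) (hlam : ∀ j ∈ I, 0 ≤ lam j) (hN2 : N2two I q A lam)
    (hh : ∀ j ∈ I, 0 < h j ∧ h j ≤ 1) :
    eLpNorm (Lh I K q h) 2 volume ≤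
      ENNReal.ofReal (kernelConst I K A lam * ∏ j ∈ I, h j ^ (-lam j - 1 / 2)) := by
  have hsymbol : Integrable (kernelSymbol I K q h) :=
    memLp_one_iff_integrable.1 (memLp_kernelSymbol hA hlam hN2 hh one_ne_zero one_ne_top)
  have hbound := eLpNorm_kernelSymbol_le hA hlam hN2 hh K 2
  rw [show (1 / (2 : ℝ≥0∞)).toReal = 1 / 2 by simp] at hbound
  rw [← ftInv_kernelSymbol, eLpNorm_two_ftInv hsymbol
    (memLp_kernelSymbol hA hlam hN2 hh two_ne_zero ofNat_ne_top), Fintype.card_coe]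
  refine (mul_le_mul_right hbound _).trans (ofReal_mul_ofReal_mul_le hA.le ?_ (by positivity) le_rfl
    ?_ (le_max_left _ _))
  · exact Finset.prod_nonneg fun j hj => Real.rpow_nonneg (hh j hj).1.le _
  · exact (memLp_ftI_prod_mul_polyWeight (fun _ : I => K) _ two_ne_zero ofNat_ne_top).eLpNorm_ne_top

theorem eLpNorm_top_Lh_le (hA : 0 < A) (hlam : ∀ j ∈ I, 0 ≤ lam j) (hN2 : N2two I q A lam)
    (hh : ∀ j ∈ I, 0 < h j ∧ h j ≤ 1) :
    eLpNorm (Lh I K q h) ⊤ volume ≤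
      ENNReal.ofReal (kernelConst I K A lam * ∏ j ∈ I, h j ^ (-lam j - 1)) := by
  have hbound := eLpNorm_kernelSymbol_le hA hlam hN2 hh K 1
  rw [div_one, ENNReal.toReal_one] at hbound
  have hconst : (2 * Real.pi) ^ (-(I.card : ℝ)) ≤ (2 * Real.pi) ^ (-(I.card : ℝ) / 2) := by
    refine Real.rpow_le_rpow_of_exponent_le (by linarith [Real.pi_gt_three]) ?_
    linarith [(Nat.cast_nonneg I.card : (0 : ℝ) ≤ I.card)]
  rw [← ftInv_kernelSymbol]
  refine (eLpNorm_top_ftInv_le _).trans ((mul_le_mul_right hbound _).trans ?_)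
  rw [Fintype.card_coe]
  refine ofReal_mul_ofReal_mul_le hA.le ?_ (by positivity) hconst ?_ (le_max_right _ _)
  · exact Finset.prod_nonneg fun j hj => Real.rpow_nonneg (hh j hj).1.le _
  · exact (memLp_ftI_prod_mul_polyWeight (fun _ : I => K) _ one_ne_zero one_ne_top).eLpNorm_ne_top

end Deconvolution

theorem statement4_general {d : ℕ} {I : Finset (Fin d)} {K : 𝓢(ℝ, ℝ)} (hK : K ≠ 0)
    {q : (Fin d → ℝ) → ℝ} {A : ℝ} (hA : 0 < A) {lam : Fin d → ℝ} (hlam : ∀ j ∈ I, 0 ≤ lam j)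
    (hN2 : N2two I q A lam) :
    0 < kernelConst I K A lam ∧
    ∀ h : Fin d → ℝ, (∀ j ∈ I, 0 < h j ∧ h j ≤ 1) →
      eLpNorm (Lh I K q h) 2 volume ≤
        ENNReal.ofReal (kernelConst I K A lam * ∏ j ∈ I, h j ^ (-lam j - 1 / 2)) ∧
      eLpNorm (Lh I K q h) ⊤ volume ≤
        ENNReal.ofReal (kernelConst I K A lam * ∏ j ∈ I, h j ^ (-lam j - 1)) :=
  ⟨kernelConst_pos hA hK I lam, fun _ hh =>
    ⟨eLpNorm_two_Lh_le hA hlam hN2 hh, eLpNorm_top_Lh_le hA hlam hN2 hh⟩⟩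

/-- **Proposition 1(ii)**: under the lower bound of Assumption (N2) on `|q̂_I|`,
with the explicit constant `C_I = A (2π)^{-|I|/2} max(‖K̂_I g_I‖_2, ‖K̂_I g_I‖_1)`,
one has `‖L_{(h_I)}‖_2 ≤ C_I ∏_{j∈I} h_j^{-λ_j-1/2}` and
`‖L_{(h_I)}‖_∞ ≤ C_I ∏_{j∈I} h_j^{-λ_j-1}` for every `h ∈ (0,1]^d`. -/
theorem statement4 (d : ℕ) (I : Finset (Fin d)) (hI : I.Nonempty)
    (K : ℝ → ℝ) (hK : IsKernel K) (q : (Fin d → ℝ) → ℝ) (hq : IsDensity q)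
    (A : ℝ) (hA : 0 < A) (lam : Fin d → ℝ) (hlam : ∀ j, 0 < lam j)
    (hN2 : N2two I q A lam)
    (gI : (I → ℝ) → ℝ) (hgI : gI = fun t => ∏ j : I, (1 + t j ^ 2) ^ (lam ↑j / 2))
    (CI : ℝ)
    (hCI : CI = A * (2 * Real.pi) ^ (-(I.card : ℝ) / 2) *
      max ((eLpNorm (fun t : I → ℝ => ftI (KI I K) t * (gI t : ℂ)) 2 volume).toReal)
          ((eLpNorm (fun t : I → ℝ => ftI (KI I K) t * (gI t : ℂ)) 1 volume).toReal)) :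
    0 < CI ∧
    ∀ h : Fin d → ℝ, (∀ j, 0 < h j ∧ h j ≤ 1) →
      eLpNorm (Lh I K q h) 2 volume ≤
        ENNReal.ofReal (CI * ∏ j ∈ I, h j ^ (-lam j - 1 / 2)) ∧
      eLpNorm (Lh I K q h) ⊤ volume ≤
        ENNReal.ofReal (CI * ∏ j ∈ I, h j ^ (-lam j - 1)) := by
  obtain ⟨⟨K, rfl⟩, -, hK1⟩ := hK
  have hK0 : K ≠ 0 := by
    rintro rfl
    simp at hK1
  obtain ⟨hpos, hbound⟩ := statement4_general hK0 hA (fun j _ => (hlam j).le) hN2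
  subst hgI hCI
  exact ⟨hpos, fun h hh => hbound h fun j _ => hh j⟩

end Deconv
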